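/- For each A ≥ 1 there exists s₀₃(A) > 1 and a constant C > 0 (depending only on p, μ, K) such that for all s₀ ≥ s₀₃(A), writing ψ = ψ_{s₀,d₀,d₁}: (i) there is a rectangle D_{s₀} ⊂ [−2,2]² such that the linear map (d₀,d₁) ↦ (ψ₀, ψ₁) is one-to-one from D_{s₀} onto [−A/s₀^{2β+1}, A/s₀^{2β+1}]² and maps ∂D_{s₀} into the boundary of this square; (ii) for all (d₀,d₁) ∈ D_{s₀}: ψ_e ≡ 0, |ψ_−(y)| < (1+|y|³)/s₀^γ for all y ∈ ℝ, |ψ₀| ≤ A/s₀^{2β+1}, |ψ₁| ≤ A/s₀^{2β+1}, and |ψ₂| < 1/s₀^{4β−1}; (iii) for all (d₀,d₁) ∈ D_{s₀}: ‖ψ'‖_{L^∞(ℝ)} ≤ CA/s₀^{2β+1} ≤ 1/s₀^{γ−3β}, and |(ψ_−)'(y)| ≤ (1+|y|³)/s₀^γ for all y ∈ ℝ. -/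

import Mathlib

/-!
On the support of `y ↦ χ(2y, s₀)` the outer cut-off `χ(·, s₀)` equals `1`, so `ψ χ = ψ`: the
outer part vanishes and every projection is an integral of `ψ` itself.  With
`c = A / s₀^(2β+1)` and `w(y) = χ(2y, s₀)`, which is even, parity gives

* `ψ₀ = c d₀ α₀` and `ψ₁ = c d₁ α₁`, where `α₀ = ∫ w k₀ ρ` and `α₁ = ∫ w y k₁ ρ`;
* `ψ₂ = c d₀ α₂`, where `α₂ = ∫ w k₂ ρ` is bounded uniformly in `s₀`.

By dominated convergence `α₀, α₁ → 1`, so both exceed `1/2` for large `s₀`; the rectangle is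
`[-1/α₀, 1/α₀] × [-1/α₁, 1/α₁]`, which a diagonal linear map sends onto the square.

All remaining quantities are at most `c (1 + |y|³)` times a constant depending only on the
cut-off function.  This suffices, without any decay of `α₂`, because `γ < 2β + 1` and because `p > 3`
means `β < 1`, that is `4β - 1 < 2β + 1`.  For the derivative bounds, `χ₀` is globally Lipschitz
on `[0, ∞)`, so `w` is Lipschitz with constant `O(1 / (K s₀^β))`, and `y w(y)` is Lipschitz
uniformly in `s₀` since `w` vanishes for `|y| ≥ K s₀^β`.
-/


noncomputable section
open MeasureTheory Real Set Filter Topology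

namespace NLHeat

/-- Bundled parameters of the problem: `p > 3`, `μ > 0`, the cut-off function `χ₀`,
the constant `K ≥ 6` and the exponent `γ` with `3β < γ < min(5β-1, 2β+1)`. -/
structure Params where
  p : ℝ
  μ : ℝ
  K : ℝ
  χ₀ : ℝ → ℝ
  γ : ℝ
  hp : 3 < p
  hμ : 0 < μ
  hK : 6 ≤ K
  hχ_smooth : ContDiffOn ℝ (⊤ : ℕ∞) χ₀ (Ici 0)
  hχ_anti : AntitoneOn χ₀ (Ici 0)
  hχ_one : ∀ x ∈ Icc (0:ℝ) 1, χ₀ x = 1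
  hχ_supp : ∀ x : ℝ, 2 ≤ x → χ₀ x = 0
  hχ_range : ∀ x : ℝ, 0 ≤ x → χ₀ x ∈ Icc (0:ℝ) 1
  hγ_lo : 3 * ((p + 1) / (2 * (p - 1))) < γ
  hγ_hi : γ < min (5 * ((p + 1) / (2 * (p - 1))) - 1) (2 * ((p + 1) / (2 * (p - 1))) + 1)

/-- The Gaussian weight `ρ(y) = (4π)^{-1/2} e^{-y²/4}`. -/
def rho (y : ℝ) : ℝ := (4 * π) ^ (-(1:ℝ)/2) * Real.exp (-(y^2)/4)

/-- The Hermite polynomials `h₀ = 1`, `h₁ = y`, `h₂ = y² - 2`. -/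
def h : ℕ → ℝ → ℝ
  | 0, _ => 1
  | 1, y => y
  | _, y => y^2 - 2

/-- The normalized Hermite polynomials `k_m = h_m / ∫ h_m² ρ`. -/
def k (m : ℕ) (y : ℝ) : ℝ := h m y / ∫ x : ℝ, (h m x)^2 * rho x

/-- The linearized operator `L v = v'' - (y/2) v' + v`. -/
def Lop (v : ℝ → ℝ) (y : ℝ) : ℝ := deriv (deriv v) y - y / 2 * deriv v y + v y

namespace Params

/-- `q = 2p/(p+1)`. -/
def q (P : Params) : ℝ := 2 * P.p / (P.p + 1)

/-- `β = (p+1)/(2(p-1))`. -/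
def β (P : Params) : ℝ := (P.p + 1) / (2 * (P.p - 1))

/-- `κ = (p-1)^{-1/(p-1)}`. -/
def κ (P : Params) : ℝ := (P.p - 1) ^ (-(1:ℝ) / (P.p - 1))

/-- The constant `b`. -/
def b (P : Params) : ℝ :=
  (1/2) * (P.p - 1) ^ ((P.p - 2) / (P.p - 1)) *
    (((4 * π) ^ ((1:ℝ)/2) * (P.p + 1)^2) /
      (P.p * ∫ y : ℝ, |y| ^ P.q * Real.exp (-(y^2)/4))) ^ ((P.p + 1)/(P.p - 1)) *
    P.μ ^ (-((P.p + 1)/(P.p - 1)))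

/-- The constant `a = 2bκ/(p-1)²`. -/
def a (P : Params) : ℝ := 2 * P.b * P.κ / (P.p - 1)^2

/-- The blow-up profile `φ(y,s) = (p-1 + b y²/s^{2β})^{-1/(p-1)} + a/s^{2β}`. -/
def φ (P : Params) (y s : ℝ) : ℝ :=
  (P.p - 1 + P.b * y^2 / s ^ (2 * P.β)) ^ (-(1:ℝ)/(P.p - 1)) + P.a / s ^ (2 * P.β)

/-- The cut-off `χ(y,s) = χ₀(|y|/(K s^β))`. -/
def chi (P : Params) (y s : ℝ) : ℝ := P.χ₀ (|y| / (P.K * s ^ P.β))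

/-- Projection of (the truncation of) `r` on `h_m`: `r_m = ∫ r χ k_m ρ`. -/
def proj (P : Params) (r : ℝ → ℝ) (s : ℝ) (m : ℕ) : ℝ :=
  ∫ y : ℝ, r y * P.chi y s * k m y * rho y

/-- The negative part `r₋ = r_b - r₀h₀ - r₁h₁ - r₂h₂` where `r_b = rχ`. -/
def rminus (P : Params) (r : ℝ → ℝ) (s y : ℝ) : ℝ :=
  r y * P.chi y s -
    (P.proj r s 0 * h 0 y + P.proj r s 1 * h 1 y + P.proj r s 2 * h 2 y)

/-- The outer part `r_e = r(1-χ)`. -/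
def re (P : Params) (r : ℝ → ℝ) (s y : ℝ) : ℝ := r y * (1 - P.chi y s)

/-- The shrinking set `ϑ_A(s)`. -/
def memTheta (P : Params) (A s : ℝ) (r : ℝ → ℝ) : Prop :=
  (∀ y : ℝ, |P.re r s y| ≤ A^2 / s ^ (P.γ - 3 * P.β)) ∧
  (∀ y : ℝ, |P.rminus r s y| ≤ A / s ^ P.γ * (1 + |y|^3)) ∧
  |P.proj r s 0| ≤ A / s ^ (2 * P.β + 1) ∧
  |P.proj r s 1| ≤ A / s ^ (2 * P.β + 1) ∧
  |P.proj r s 2| ≤ Real.sqrt A / s ^ (4 * P.β - 1)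

/-- The potential `V(y,s) = p φ^{p-1} - p/(p-1)`. -/
def Vpot (P : Params) (y s : ℝ) : ℝ := P.p * (P.φ y s) ^ (P.p - 1) - P.p / (P.p - 1)

/-- The quadratic term `B(v)`. -/
def Bterm (P : Params) (v : ℝ → ℝ) (y s : ℝ) : ℝ :=
  |P.φ y s + v y| ^ (P.p - 1) * (P.φ y s + v y) - (P.φ y s) ^ P.p -
    P.p * (P.φ y s) ^ (P.p - 1) * v y

/-- The gradient term `G(v) = μ|∂_yφ + ∂_yv|^q - μ|∂_yφ|^q`. -/
def Gterm (P : Params) (v : ℝ → ℝ) (y s : ℝ) : ℝ :=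
  P.μ * |deriv (fun z => P.φ z s) y + deriv v y| ^ P.q -
    P.μ * |deriv (fun z => P.φ z s) y| ^ P.q

/-- The rest term `R(y,s)`. -/
def Rterm (P : Params) (y s : ℝ) : ℝ :=
  deriv (deriv (fun z => P.φ z s)) y - y / 2 * deriv (fun z => P.φ z s) y -
    P.φ y s / (P.p - 1) + (P.φ y s) ^ P.p - deriv (fun σ => P.φ y σ) s +
    P.μ * |deriv (fun z => P.φ z s) y| ^ P.q

/-- `v` solves equation (E): `∂_s v = (L+V)v + B(v) + G(v) + R` on `ℝ × [s₀,s₁]`. -/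
def SolvesE (P : Params) (v : ℝ → ℝ → ℝ) (s₀ s₁ : ℝ) : Prop :=
  ∀ s ∈ Icc s₀ s₁, ∀ y : ℝ,
    HasDerivAt (fun σ => v σ y)
      (Lop (v s) y + P.Vpot y s * v s y + P.Bterm (v s) y s + P.Gterm (v s) y s +
        P.Rterm y s) s

/-- The initial data `ψ_{s₀,d₀,d₁}`. -/
def ψinit (P : Params) (A s₀ d₀ d₁ : ℝ) (y : ℝ) : ℝ :=
  A / s₀ ^ (2 * P.β + 1) * (d₀ * h 0 y + d₁ * h 1 y) * P.chi (2 * y) s₀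

end Params

end NLHeat

namespace NLHeat

/-! ### Gaussian integrals -/

lemma rho_pos (y : ℝ) : 0 < rho y := by
  unfold rho; positivity

lemma rho_neg (y : ℝ) : rho (-y) = rho y := by
  simp [rho]

lemma continuous_rho : Continuous rho := by
  unfold rho; fun_prop

lemma integrable_pow_mul_rho (n : ℕ) : Integrable (fun y : ℝ => y ^ n * rho y) := by
  have h1 := (integrable_rpow_mul_exp_neg_mul_sq (b := 1 / 4) (by norm_num) (s := (n : ℝ))
    (lt_of_lt_of_le (by norm_num) (Nat.cast_nonneg n))).const_mul ((4 * π) ^ (-(1 : ℝ) / 2))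
  refine h1.congr (Eventually.of_forall fun y => ?_)
  simp only [rho, Real.rpow_natCast]
  rw [show -(1 / 4 : ℝ) * y ^ 2 = -(y ^ 2) / 4 by ring]
  ring

lemma integrable_pow_mul_k_mul_rho (m j : ℕ) :
    Integrable (fun y : ℝ => y ^ j * k m y * rho y) := by
  have key : Integrable (fun y : ℝ => y ^ j * h m y * rho y) := by
    match m with
    | 0 => simpa [h] using integrable_pow_mul_rho j
    | 1 =>
      refine (integrable_pow_mul_rho (j + 1)).congr (Eventually.of_forall fun y => ?_)
      simp only [h]; ring
    | n + 2 =>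
      refine ((integrable_pow_mul_rho (j + 2)).sub
        ((integrable_pow_mul_rho j).const_mul 2)).congr (Eventually.of_forall fun y => ?_)
      simp only [h, Pi.sub_apply]; ring
  refine (key.div_const (∫ x : ℝ, (h m x) ^ 2 * rho x)).congr (Eventually.of_forall fun y => ?_)
  simp only [k]; ring

lemma integral_even_pow_mul_rho_pos (m : ℕ) : 0 < ∫ y : ℝ, y ^ (2 * m) * rho y := by
  rw [integral_pos_iff_support_of_nonneg _ (integrable_pow_mul_rho _)]
  · refine lt_of_lt_of_le (b := volume (Ioi (0 : ℝ))) (by simp) (measure_mono fun y hy => ?_)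
    exact (mul_pos (pow_pos hy _) (rho_pos y)).ne'
  · intro y
    exact mul_nonneg ((even_two_mul m).pow_nonneg y) (rho_pos y).le

/-- The normalization of `k_m` for `m = 0, 1`, where `h_m(y) = y^m`. -/
lemma integral_pow_mul_k (m : ℕ) (hm : m ≤ 1) : ∫ y : ℝ, y ^ m * k m y * rho y = 1 := by
  have hh : ∀ y, h m y = y ^ m := by
    intro y
    interval_cases m <;> simp [h]
  have hp := integral_even_pow_mul_rho_pos m
  have e : ∀ y : ℝ, (y ^ m) ^ 2 = y ^ (2 * m) := fun y => by ring
  have : (fun y : ℝ => y ^ m * k m y * rho y) =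
      fun y => (y ^ (2 * m) * rho y) / ∫ x : ℝ, x ^ (2 * m) * rho x := by
    funext y
    simp only [k, hh, e]
    rw [← e]; ring
  rw [this, integral_div, div_self hp.ne']

namespace Params

/-! ### The inner cut-off -/

/-- The cut-off `w(y) = χ(2y, s)` entering the initial data. -/
def cut (P : Params) (s y : ℝ) : ℝ := P.chi (2 * y) s

lemma scale_pos (P : Params) {s : ℝ} (hs : 1 ≤ s) : 0 < P.K * s ^ P.β :=
  mul_pos (by linarith [P.hK]) (Real.rpow_pos_of_pos (by linarith) _)

lemma β_pos (P : Params) : 0 < P.β := by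
  have := P.hp
  exact div_pos (by linarith) (by linarith)

lemma β_lt_one (P : Params) : P.β < 1 := by
  have := P.hp
  unfold β
  rw [div_lt_one (by linarith)]; linarith

lemma γ_lt (P : Params) : P.γ < 2 * P.β + 1 := lt_of_lt_of_le P.hγ_hi (min_le_right _ _)

lemma γ_pos (P : Params) : 0 < P.γ := lt_trans (mul_pos three_pos P.β_pos) P.hγ_lo

lemma scale_ge_one (P : Params) {s : ℝ} (hs : 1 ≤ s) : 1 ≤ P.K * s ^ P.β := by
  have h1 := Real.one_le_rpow hs P.β_pos.le
  nlinarith [P.hK]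

lemma cut_mem (P : Params) {s : ℝ} (hs : 1 ≤ s) (y : ℝ) : 0 ≤ P.cut s y ∧ P.cut s y ≤ 1 :=
  P.hχ_range _ (div_nonneg (abs_nonneg _) (P.scale_pos hs).le)

lemma cut_neg (P : Params) (s y : ℝ) : P.cut s (-y) = P.cut s y := by
  simp [cut, chi]

lemma cut_eq_zero (P : Params) {s y : ℝ} (hs : 1 ≤ s) (hy : P.K * s ^ P.β < |y|) :
    P.cut s y = 0 := by
  refine P.hχ_supp _ ?_
  rw [le_div_iff₀ (P.scale_pos hs), abs_mul, abs_two]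
  linarith

/-- The outer cut-off is `1` wherever the inner one does not vanish. -/
lemma cut_mul_chi (P : Params) {s : ℝ} (hs : 1 ≤ s) (y : ℝ) :
    P.cut s y * P.chi y s = P.cut s y := by
  rcases lt_or_ge (P.K * s ^ P.β) |y| with hy | hy
  · simp [P.cut_eq_zero hs hy]
  · have : P.chi y s = 1 := P.hχ_one _
      ⟨div_nonneg (abs_nonneg _) (P.scale_pos hs).le, (div_le_one (P.scale_pos hs)).2 hy⟩
    rw [this, mul_one]

lemma tendsto_cut (P : Params) (y : ℝ) : Tendsto (fun s => P.cut s y) atTop (𝓝 1) := by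
  refine tendsto_const_nhds.congr' ?_
  filter_upwards [(tendsto_rpow_atTop P.β_pos).eventually_ge_atTop (|2 * y|),
    eventually_ge_atTop 1] with s h1 h2
  refine (P.hχ_one _ ⟨div_nonneg (abs_nonneg _) (P.scale_pos h2).le, ?_⟩).symm
  rw [div_le_one (P.scale_pos h2)]
  nlinarith [P.hK, abs_nonneg (2 * y)]

/-- `χ₀` is `C¹` on the compact interval `[0, 2]` and vanishes beyond it, hence it is Lipschitz
on the whole half-line. -/
lemma exists_lipschitz (P : Params) : ∃ L : ℝ, 0 ≤ L ∧
    ∀ x y : ℝ, 0 ≤ x → 0 ≤ y → |P.χ₀ x - P.χ₀ y| ≤ L * |x - y| := by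
  obtain ⟨L, hL⟩ := (P.hχ_smooth.mono (Icc_subset_Ici_self : Icc (0 : ℝ) 2 ⊆ Ici 0)
    ).exists_lipschitzOnWith (by simp) (convex_Icc _ _) isCompact_Icc
  refine ⟨L, L.2, fun x y hx hy => ?_⟩
  have clamp : ∀ z : ℝ, P.χ₀ z = P.χ₀ (min z 2) := by
    intro z
    rcases le_total z 2 with hz | hz
    · rw [min_eq_left hz]
    · rw [min_eq_right hz, P.hχ_supp z hz, P.hχ_supp 2 le_rfl]
  have h1 := hL.dist_le_mul (min x 2) ⟨le_min hx two_pos.le, min_le_right _ _⟩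
    (min y 2) ⟨le_min hy two_pos.le, min_le_right _ _⟩
  rw [Real.dist_eq, Real.dist_eq, ← clamp, ← clamp] at h1
  exact h1.trans (mul_le_mul_of_nonneg_left (by simpa using abs_min_sub_min_le_max x 2 y 2) L.2)

/-- `w` is Lipschitz with constant `2L / (K s^β)`. -/
lemma cut_lipschitz (P : Params) {L : ℝ} (hL0 : 0 ≤ L)
    (hL : ∀ x y : ℝ, 0 ≤ x → 0 ≤ y → |P.χ₀ x - P.χ₀ y| ≤ L * |x - y|)
    {s : ℝ} (hs : 1 ≤ s) (x y : ℝ) :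
    |P.cut s x - P.cut s y| ≤ 2 * L / (P.K * s ^ P.β) * |x - y| := by
  have hR := P.scale_pos hs
  refine (hL _ _ (div_nonneg (abs_nonneg _) hR.le) (div_nonneg (abs_nonneg _) hR.le)).trans ?_
  rw [← sub_div, abs_div, abs_of_pos hR]
  have h1 : |(|2 * x| - |2 * y|)| ≤ 2 * |x - y| := by
    refine (abs_abs_sub_abs_le _ _).trans ?_
    rw [← mul_sub, abs_mul, abs_two]
  calc L * (|(|2 * x| - |2 * y|)| / (P.K * s ^ P.β))
      ≤ L * (2 * |x - y| / (P.K * s ^ P.β)) := by gcongr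
    _ = _ := by ring

lemma continuous_cut (P : Params) {s : ℝ} (hs : 1 ≤ s) : Continuous (P.cut s) := by
  obtain ⟨L, hL0, hL⟩ := P.exists_lipschitz
  have hc : 0 ≤ 2 * L / (P.K * s ^ P.β) := div_nonneg (by linarith) (P.scale_pos hs).le
  refine (LipschitzWith.of_dist_le_mul (K := ⟨_, hc⟩) fun x y => ?_).continuous
  exact P.cut_lipschitz hL0 hL hs x y

/-- `y w(y)` is Lipschitz uniformly in `s`: the slope `O(1/(K s^β))` of `w` is compensated by
`|y| ≤ K s^β` on its support. -/
lemma mul_cut_lipschitz (P : Params) {L : ℝ} (hL0 : 0 ≤ L)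
    (hL : ∀ x y : ℝ, 0 ≤ x → 0 ≤ y → |P.χ₀ x - P.χ₀ y| ≤ L * |x - y|)
    {s : ℝ} (hs : 1 ≤ s) (x y : ℝ) :
    |x * P.cut s x - y * P.cut s y| ≤ (1 + 2 * L) * |x - y| := by
  have hR := P.scale_pos hs
  have key : ∀ x y : ℝ, |x| ≤ P.K * s ^ P.β →
      |x * P.cut s x - y * P.cut s y| ≤ (1 + 2 * L) * |x - y| := by
    intro x y hx
    have h1 := P.cut_lipschitz hL0 hL hs x y
    have h2 : |x| * |P.cut s x - P.cut s y| ≤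
        P.K * s ^ P.β * (2 * L / (P.K * s ^ P.β) * |x - y|) := by gcongr
    have h3 : P.K * s ^ P.β * (2 * L / (P.K * s ^ P.β) * |x - y|) = 2 * L * |x - y| := by
      rw [← mul_assoc, mul_div_cancel₀ _ hR.ne']
    have h4 : |x - y| * |P.cut s y| ≤ |x - y| * 1 := by
      gcongr
      rw [abs_of_nonneg (P.cut_mem hs y).1]
      exact (P.cut_mem hs y).2
    calc |x * P.cut s x - y * P.cut s y|
        = |(x - y) * P.cut s y + x * (P.cut s x - P.cut s y)| := by ring_nf
      _ ≤ |x - y| * |P.cut s y| + |x| * |P.cut s x - P.cut s y| := by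
          rw [← abs_mul, ← abs_mul]; exact abs_add_le _ _
      _ ≤ (1 + 2 * L) * |x - y| := by linarith
  rcases lt_or_ge (P.K * s ^ P.β) |x| with hx | hx
  · rcases lt_or_ge (P.K * s ^ P.β) |y| with hy | hy
    · rw [P.cut_eq_zero hs hx, P.cut_eq_zero hs hy]
      simp only [mul_zero, sub_zero, abs_zero]
      positivity
    · rw [abs_sub_comm, abs_sub_comm x y]
      exact key y x hy
  · exact key x y hx

/-! ### Projections of the initial data -/

/-- The coefficient `∫ y^j w k_m ρ` of `c d_j` in the projection `ψ_m`. -/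
def coef (P : Params) (s : ℝ) (m j : ℕ) : ℝ :=
  ∫ y : ℝ, P.cut s y * (y ^ j * k m y * rho y)

lemma integrable_coef (P : Params) {s : ℝ} (hs : 1 ≤ s) (m j : ℕ) :
    Integrable (fun y : ℝ => P.cut s y * (y ^ j * k m y * rho y)) := by
  refine (integrable_pow_mul_k_mul_rho m j).bdd_mul (c := 1)
    (P.continuous_cut hs).aestronglyMeasurable (Eventually.of_forall fun y => ?_)
  rw [Real.norm_eq_abs, abs_of_nonneg (P.cut_mem hs y).1]
  exact (P.cut_mem hs y).2

lemma abs_coef_le (P : Params) {s : ℝ} (hs : 1 ≤ s) (m j : ℕ) :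
    |P.coef s m j| ≤ ∫ y : ℝ, |y ^ j * k m y * rho y| := by
  rw [coef, ← Real.norm_eq_abs]
  refine norm_integral_le_of_norm_le (integrable_pow_mul_k_mul_rho m j).abs
    (Eventually.of_forall fun y => ?_)
  rw [norm_mul, Real.norm_eq_abs, Real.norm_eq_abs, abs_of_nonneg (P.cut_mem hs y).1]
  exact mul_le_of_le_one_left (abs_nonneg _) (P.cut_mem hs y).2

lemma tendsto_coef (P : Params) (m : ℕ) (hm : m ≤ 1) :
    Tendsto (fun s => P.coef s m m) atTop (𝓝 1) := by
  rw [← integral_pow_mul_k m hm]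
  refine tendsto_integral_filter_of_dominated_convergence
    (fun y => |y ^ m * k m y * rho y|) ?_ ?_ (integrable_pow_mul_k_mul_rho m m).abs ?_
  · filter_upwards [eventually_ge_atTop 1] with s hs
    exact (P.integrable_coef hs m m).aestronglyMeasurable
  · filter_upwards [eventually_ge_atTop 1] with s hs
    refine Eventually.of_forall fun y => ?_
    rw [norm_mul, Real.norm_eq_abs, Real.norm_eq_abs, abs_of_nonneg (P.cut_mem hs y).1]
    exact mul_le_of_le_one_left (abs_nonneg _) (P.cut_mem hs y).2
  · refine Eventually.of_forall fun y => ?_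
    simpa using (P.tendsto_cut y).mul_const (y ^ m * k m y * rho y)

/-- Coefficients with an odd integrand vanish. -/
lemma coef_eq_zero (P : Params) (s : ℝ) (m j : ℕ)
    (hodd : ∀ y : ℝ, (-y) ^ j * h m (-y) = -(y ^ j * h m y)) : P.coef s m j = 0 := by
  have h1 : P.coef s m j = -P.coef s m j := by
    conv_lhs => unfold coef
    rw [← integral_neg_eq_self, coef, ← integral_neg]
    congr 1
    funext y
    have := hodd y
    simp only [cut_neg, rho_neg, k]
    rw [← mul_div_assoc, this]
    ring
  linarith

lemma ψinit_eq (P : Params) (A s d₀ d₁ y : ℝ) :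
    P.ψinit A s d₀ d₁ y = A / s ^ (2 * P.β + 1) * (d₀ * P.cut s y + d₁ * (y * P.cut s y)) := by
  simp only [ψinit, cut, h]; ring

lemma ψinit_mul_chi (P : Params) (A : ℝ) {s : ℝ} (hs : 1 ≤ s) (d₀ d₁ y : ℝ) :
    P.ψinit A s d₀ d₁ y * P.chi y s = P.ψinit A s d₀ d₁ y := by
  have := P.cut_mul_chi hs y
  rw [ψinit_eq]
  linear_combination (A / s ^ (2 * P.β + 1) * (d₀ + d₁ * y)) * this

lemma proj_ψinit (P : Params) (A : ℝ) {s : ℝ} (hs : 1 ≤ s) (d₀ d₁ : ℝ) (m : ℕ) :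
    P.proj (P.ψinit A s d₀ d₁) s m =
      A / s ^ (2 * P.β + 1) * (d₀ * P.coef s m 0 + d₁ * P.coef s m 1) := by
  unfold proj coef
  rw [← integral_const_mul, ← integral_const_mul, ← integral_add
    ((P.integrable_coef hs m 0).const_mul _) ((P.integrable_coef hs m 1).const_mul _),
    ← integral_const_mul]
  congr 1
  funext y
  rw [P.ψinit_mul_chi A hs, ψinit_eq]
  ring

lemma proj_zero (P : Params) (A : ℝ) {s : ℝ} (hs : 1 ≤ s) (d₀ d₁ : ℝ) :
    P.proj (P.ψinit A s d₀ d₁) s 0 = A / s ^ (2 * P.β + 1) * (d₀ * P.coef s 0 0) := by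
  rw [P.proj_ψinit A hs, P.coef_eq_zero s 0 1 (fun y => by simp [h])]; ring

lemma proj_one (P : Params) (A : ℝ) {s : ℝ} (hs : 1 ≤ s) (d₀ d₁ : ℝ) :
    P.proj (P.ψinit A s d₀ d₁) s 1 = A / s ^ (2 * P.β + 1) * (d₁ * P.coef s 1 1) := by
  rw [P.proj_ψinit A hs, P.coef_eq_zero s 1 0 (fun y => by simp [h])]; ring

lemma proj_two (P : Params) (A : ℝ) {s : ℝ} (hs : 1 ≤ s) (d₀ d₁ : ℝ) :
    P.proj (P.ψinit A s d₀ d₁) s 2 = A / s ^ (2 * P.β + 1) * (d₀ * P.coef s 2 0) := by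
  rw [P.proj_ψinit A hs, P.coef_eq_zero s 2 1 (fun y => by simp [h])]; ring

/-! ### Pointwise bounds -/

lemma abs_ψinit_le (P : Params) {A s d₀ d₁ : ℝ} (hA : 0 ≤ A) (hs : 1 ≤ s)
    (h₀ : |d₀| ≤ 2) (h₁ : |d₁| ≤ 2) (y : ℝ) :
    |P.ψinit A s d₀ d₁ y| ≤ A / s ^ (2 * P.β + 1) * (2 + 2 * |y|) := by
  have hw : |P.cut s y| ≤ 1 := by
    rw [abs_of_nonneg (P.cut_mem hs y).1]; exact (P.cut_mem hs y).2
  have hc : 0 ≤ A / s ^ (2 * P.β + 1) :=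
    div_nonneg hA (Real.rpow_pos_of_pos (by linarith) _).le
  rw [ψinit_eq, abs_mul, abs_of_nonneg hc]
  refine mul_le_mul_of_nonneg_left ?_ hc
  calc |d₀ * P.cut s y + d₁ * (y * P.cut s y)|
      ≤ |d₀| * |P.cut s y| + |d₁| * (|y| * |P.cut s y|) := by
        rw [← abs_mul, ← abs_mul, ← abs_mul]; exact abs_add_le _ _
    _ ≤ 2 * 1 + 2 * (|y| * 1) := by gcongr
    _ = 2 + 2 * |y| := by ring

/-- The bound comes from a Lipschitz estimate for `ψ`, so no differentiability of the cut-off has to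
be discussed, at `y = 0` or elsewhere. -/
lemma abs_deriv_ψinit_le (P : Params) {L : ℝ} (hL0 : 0 ≤ L)
    (hL : ∀ x y : ℝ, 0 ≤ x → 0 ≤ y → |P.χ₀ x - P.χ₀ y| ≤ L * |x - y|)
    {A s d₀ d₁ : ℝ} (hA : 0 ≤ A) (hs : 1 ≤ s) (h₀ : |d₀| ≤ 2) (h₁ : |d₁| ≤ 2) (y : ℝ) :
    |deriv (P.ψinit A s d₀ d₁) y| ≤ A / s ^ (2 * P.β + 1) * (2 + 8 * L) := by
  have hc : 0 ≤ A / s ^ (2 * P.β + 1) :=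
    div_nonneg hA (Real.rpow_pos_of_pos (by linarith) _).le
  rw [← Real.norm_eq_abs]
  refine norm_deriv_le_of_lip' (mul_nonneg hc (by linarith)) (Eventually.of_forall fun x => ?_)
  rw [Real.norm_eq_abs, Real.norm_eq_abs, ψinit_eq, ψinit_eq, ← mul_sub, abs_mul,
    abs_of_nonneg hc, mul_assoc]
  refine mul_le_mul_of_nonneg_left ?_ hc
  have e1 : |P.cut s x - P.cut s y| ≤ 2 * L * |x - y| := by
    refine (P.cut_lipschitz hL0 hL hs x y).trans ?_
    gcongr
    exact div_le_self (by linarith) (P.scale_ge_one hs)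
  have e2 := P.mul_cut_lipschitz hL0 hL hs x y
  calc |d₀ * P.cut s x + d₁ * (x * P.cut s x) - (d₀ * P.cut s y + d₁ * (y * P.cut s y))|
      = |d₀ * (P.cut s x - P.cut s y) + d₁ * (x * P.cut s x - y * P.cut s y)| := by ring_nf
    _ ≤ |d₀| * |P.cut s x - P.cut s y| + |d₁| * |x * P.cut s x - y * P.cut s y| := by
        rw [← abs_mul, ← abs_mul]; exact abs_add_le _ _
    _ ≤ 2 * (2 * L * |x - y|) + 2 * ((1 + 2 * L) * |x - y|) := by gcongr
    _ = (2 + 8 * L) * |x - y| := by ring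

/-- Cubic control of `ψ₋`.  Here `M` stands for a bound on `|∫ w k₂ ρ|`, so that
`|ψ₂| ≤ c |d₀| M ≤ 2 c M`; no decay of this integral in `s` is needed. -/
lemma abs_rminus_ψinit_le (P : Params) {A s d₀ d₁ M c : ℝ} (hc : c = A / s ^ (2 * P.β + 1))
    (hA : 0 ≤ A) (hs : 1 ≤ s) (h₀ : |d₀| ≤ 2) (h₁ : |d₁| ≤ 2) (hM : 0 ≤ M)
    (p₀ : |P.proj (P.ψinit A s d₀ d₁) s 0| ≤ c) (p₁ : |P.proj (P.ψinit A s d₀ d₁) s 1| ≤ c)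
    (p₂ : |P.proj (P.ψinit A s d₀ d₁) s 2| ≤ c * (2 * M)) (y : ℝ) :
    |P.rminus (P.ψinit A s d₀ d₁) s y| ≤ c * (10 + 6 * M) * (1 + |y| ^ 3) := by
  have hc0 : 0 ≤ c := (abs_nonneg _).trans p₀
  have hψ := P.abs_ψinit_le hA hs h₀ h₁ y
  rw [← hc] at hψ
  set t := |y| with ht
  have ht0 : 0 ≤ t := abs_nonneg y
  have hy2 : |y ^ 2 - 2| ≤ t ^ 2 + 2 := by
    refine (abs_sub _ _).trans ?_
    rw [abs_pow, abs_two]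
  have t1 : t ≤ 1 + t ^ 3 := by
    nlinarith [mul_nonneg ht0 (sq_nonneg (t - 1)), sq_nonneg (t - 1)]
  have t2 : t ^ 2 ≤ 1 + t ^ 3 := by
    nlinarith [sq_nonneg (t - 1), mul_nonneg ht0 (sq_nonneg (t - 1))]
  have t3 : 0 ≤ t ^ 3 := by positivity
  rw [rminus, P.ψinit_mul_chi A hs]
  generalize P.ψinit A s d₀ d₁ y = u at *
  generalize P.proj (P.ψinit A s d₀ d₁) s 0 = q₀ at *
  generalize P.proj (P.ψinit A s d₀ d₁) s 1 = q₁ at *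
  generalize P.proj (P.ψinit A s d₀ d₁) s 2 = q₂ at *
  simp only [h, mul_one]
  calc |u - (q₀ + q₁ * y + q₂ * (y ^ 2 - 2))|
      ≤ |u| + (|q₀| + |q₁| * t + |q₂| * |y ^ 2 - 2|) := by
        refine (abs_sub _ _).trans ?_
        gcongr
        refine (abs_add_le _ _).trans ?_
        rw [abs_mul q₂]
        gcongr
        refine (abs_add_le _ _).trans ?_
        rw [abs_mul]
    _ ≤ c * (2 + 2 * t) + (c + c * t + c * (2 * M) * (t ^ 2 + 2)) := by gcongr
    _ = c * (3 + 3 * t + 2 * M * (t ^ 2 + 2)) := by ring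
    _ ≤ c * (3 * (1 + t ^ 3) + 3 * (1 + t ^ 3) + 2 * M * (1 + t ^ 3 + 2 * (1 + t ^ 3))) := by
        gcongr <;> linarith
    _ ≤ c * (10 + 6 * M) * (1 + t ^ 3) := by nlinarith [mul_nonneg hc0 t3]

lemma abs_deriv_rminus_ψinit_le (P : Params) {A s d₀ d₁ M c D : ℝ} (hs : 1 ≤ s)
    (hM : 0 ≤ M) (p₁ : |P.proj (P.ψinit A s d₀ d₁) s 1| ≤ c)
    (p₂ : |P.proj (P.ψinit A s d₀ d₁) s 2| ≤ c * (2 * M)) (hD : 0 ≤ D) (y : ℝ)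
    (hψ : |deriv (P.ψinit A s d₀ d₁) y| ≤ c * D) :
    |deriv (fun z => P.rminus (P.ψinit A s d₀ d₁) s z) y| ≤
      c * (1 + 4 * M + D) * (1 + |y| ^ 3) := by
  have hc0 : 0 ≤ c := (abs_nonneg _).trans p₁
  have e : (fun z => P.rminus (P.ψinit A s d₀ d₁) s z) = fun z => P.ψinit A s d₀ d₁ z -
      (P.proj (P.ψinit A s d₀ d₁) s 0 + P.proj (P.ψinit A s d₀ d₁) s 1 * z +
        P.proj (P.ψinit A s d₀ d₁) s 2 * (z ^ 2 - 2)) := by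
    funext z
    rw [rminus, P.ψinit_mul_chi A hs]
    simp only [h, mul_one]
  rw [e]
  generalize P.proj (P.ψinit A s d₀ d₁) s 0 = q₀ at *
  generalize P.proj (P.ψinit A s d₀ d₁) s 1 = q₁ at *
  generalize P.proj (P.ψinit A s d₀ d₁) s 2 = q₂ at *
  generalize P.ψinit A s d₀ d₁ = f at *
  have hq : HasDerivAt (fun z : ℝ => q₀ + q₁ * z + q₂ * (z ^ 2 - 2)) (q₁ + q₂ * (2 * y)) y := by
    have h1 := ((hasDerivAt_id y).const_mul q₁).const_add q₀
    have h2 := (((hasDerivAt_id y).pow 2).sub_const 2).const_mul q₂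
    refine (h1.add h2).congr_deriv ?_
    simp
  have ht0 : 0 ≤ |y| := abs_nonneg y
  set t := |y| with ht
  have t1 : t ≤ 1 + t ^ 3 := by
    nlinarith [mul_nonneg ht0 (sq_nonneg (t - 1)), sq_nonneg (t - 1)]
  have t3 : 0 ≤ t ^ 3 := by positivity
  by_cases hf : DifferentiableAt ℝ f y
  · rw [(hf.hasDerivAt.fun_sub hq).deriv]
    calc |deriv f y - (q₁ + q₂ * (2 * y))|
        ≤ |deriv f y| + (|q₁| + |q₂| * (2 * t)) := by
          refine (abs_sub _ _).trans ?_
          gcongr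
          refine (abs_add_le _ _).trans ?_
          rw [abs_mul, abs_mul, abs_two]
      _ ≤ c * D + (c + c * (2 * M) * (2 * (1 + t ^ 3))) := by gcongr
      _ ≤ c * (1 + 4 * M + D) * (1 + t ^ 3) := by
          nlinarith [mul_nonneg (mul_nonneg hc0 hD) t3, mul_nonneg hc0 t3]
  -- Where `ψ` is not differentiable neither is `ψ₋`, and `deriv` takes the value `0`.
  · rw [deriv_zero_of_not_differentiableAt, abs_zero]
    · positivity
    · intro hd
      refine hf ?_
      simpa using hd.fun_add hq.differentiableAt

end Params

/-! ### The diagonal linear map -/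

lemma bijOn_mul_Icc {α c t : ℝ} (hα : 0 < α) (hc : 0 < c) (ht : t = c * α) :
    BijOn (fun d : ℝ => t * d) (Icc (-(1 / α)) (1 / α)) (Icc (-c) c) := by
  have hpos : 0 < t := ht ▸ mul_pos hc hα
  have hinv : t * (1 / α) = c := by rw [ht]; field_simp
  refine ⟨fun d hd => ?_, (mul_right_injective₀ hpos.ne').injOn, fun x hx => ⟨x / t, ?_, ?_⟩⟩
  · constructor
    · nlinarith [mul_le_mul_of_nonneg_left hd.1 hpos.le]
    · nlinarith [mul_le_mul_of_nonneg_left hd.2 hpos.le]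
  · constructor
    · rw [le_div_iff₀ hpos]; linarith [hx.1]
    · rw [div_le_iff₀ hpos]; linarith [hx.2]
  · simp only; field_simp

/-- A diagonal linear map stretching a product of centred intervals onto a square is a bijection
and respects the boundaries. -/
lemma rectangle_map {α₀ α₁ c : ℝ} (h₀ : 0 < α₀) (h₁ : 0 < α₁) (hc : 0 < c) :
    BijOn (fun d : ℝ × ℝ => (c * (d.1 * α₀), c * (d.2 * α₁)))
      (Icc (-(1 / α₀)) (1 / α₀) ×ˢ Icc (-(1 / α₁)) (1 / α₁)) (Icc (-c) c ×ˢ Icc (-c) c) ∧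
    MapsTo (fun d : ℝ × ℝ => (c * (d.1 * α₀), c * (d.2 * α₁)))
      (frontier (Icc (-(1 / α₀)) (1 / α₀) ×ˢ Icc (-(1 / α₁)) (1 / α₁)))
      (frontier (Icc (-c) c ×ˢ Icc (-c) c)) := by
  have e : (fun d : ℝ × ℝ => (c * (d.1 * α₀), c * (d.2 * α₁))) =
      Prod.map (fun d => c * α₀ * d) (fun d => c * α₁ * d) := by
    funext d; simp only [Prod.map]; congr 1 <;> ring
  have B₀ := bijOn_mul_Icc h₀ hc rfl
  have B₁ := bijOn_mul_Icc h₁ hc rfl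
  have F : ∀ {α : ℝ}, 0 < α → MapsTo (fun d : ℝ => c * α * d)
      (frontier (Icc (-(1 / α)) (1 / α))) (frontier (Icc (-c) c)) := by
    intro α hα d hd
    have hα' : 0 < 1 / α := by positivity
    rw [frontier_Icc (by linarith)] at hd ⊢
    rcases hd with rfl | rfl
    · left; field_simp
    · right; simp only [mem_singleton_iff]; field_simp
  rw [e]
  refine ⟨B₀.prodMap B₁, ?_⟩
  rw [frontier_prod_eq, frontier_prod_eq]
  simp only [isClosed_Icc.closure_eq]
  rintro ⟨x, y⟩ (⟨hx, hy⟩ | ⟨hx, hy⟩)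
  · exact Or.inl ⟨B₀.mapsTo hx, F h₁ hy⟩
  · exact Or.inr ⟨F h₀ hx, B₁.mapsTo hy⟩

end NLHeat

/-- properties of the initial data `ψ_{s₀,d₀,d₁}`. -/
theorem initial_data_properties (P : NLHeat.Params) :
    ∃ C : ℝ, 0 < C ∧ ∀ A : ℝ, 1 ≤ A → ∃ s₀₃ : ℝ, 1 < s₀₃ ∧ ∀ s₀ : ℝ, s₀₃ ≤ s₀ →
      ∃ a₁ b₁ a₂ b₂ : ℝ,
        -- (i) a rectangle D_{s₀} ⊆ [-2,2]² ...
        (Icc a₁ b₁ ×ˢ Icc a₂ b₂ ⊆ Icc (-2:ℝ) 2 ×ˢ Icc (-2:ℝ) 2) ∧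
        -- ... on which (d₀,d₁) ↦ (ψ₀,ψ₁) is one-to-one onto the square
        Set.BijOn
          (fun d : ℝ × ℝ =>
            (P.proj (P.ψinit A s₀ d.1 d.2) s₀ 0, P.proj (P.ψinit A s₀ d.1 d.2) s₀ 1))
          (Icc a₁ b₁ ×ˢ Icc a₂ b₂)
          (Icc (-(A / s₀ ^ (2 * P.β + 1))) (A / s₀ ^ (2 * P.β + 1)) ×ˢ
            Icc (-(A / s₀ ^ (2 * P.β + 1))) (A / s₀ ^ (2 * P.β + 1))) ∧
        -- ... mapping the boundary into the boundary of this square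
        Set.MapsTo
          (fun d : ℝ × ℝ =>
            (P.proj (P.ψinit A s₀ d.1 d.2) s₀ 0, P.proj (P.ψinit A s₀ d.1 d.2) s₀ 1))
          (frontier (Icc a₁ b₁ ×ˢ Icc a₂ b₂))
          (frontier (Icc (-(A / s₀ ^ (2 * P.β + 1))) (A / s₀ ^ (2 * P.β + 1)) ×ˢ
            Icc (-(A / s₀ ^ (2 * P.β + 1))) (A / s₀ ^ (2 * P.β + 1)))) ∧
        -- (ii) and (iii): for all (d₀,d₁) in the rectangle
        (∀ d₀ ∈ Icc a₁ b₁, ∀ d₁ ∈ Icc a₂ b₂,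
          -- (ii)
          (∀ y : ℝ, P.re (P.ψinit A s₀ d₀ d₁) s₀ y = 0) ∧
          (∀ y : ℝ, |P.rminus (P.ψinit A s₀ d₀ d₁) s₀ y| < (1 + |y|^3) / s₀ ^ P.γ) ∧
          |P.proj (P.ψinit A s₀ d₀ d₁) s₀ 0| ≤ A / s₀ ^ (2 * P.β + 1) ∧
          |P.proj (P.ψinit A s₀ d₀ d₁) s₀ 1| ≤ A / s₀ ^ (2 * P.β + 1) ∧
          |P.proj (P.ψinit A s₀ d₀ d₁) s₀ 2| < 1 / s₀ ^ (4 * P.β - 1) ∧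
          -- (iii)
          (∀ y : ℝ, |deriv (P.ψinit A s₀ d₀ d₁) y| ≤ C * A / s₀ ^ (2 * P.β + 1)) ∧
          C * A / s₀ ^ (2 * P.β + 1) ≤ 1 / s₀ ^ (P.γ - 3 * P.β) ∧
          (∀ y : ℝ,
            |deriv (fun z => P.rminus (P.ψinit A s₀ d₀ d₁) s₀ z) y| ≤
              (1 + |y|^3) / s₀ ^ P.γ)) := by
  obtain ⟨L, hL0, hL⟩ := P.exists_lipschitz
  set M : ℝ := ∫ y : ℝ, |y ^ 0 * NLHeat.k 2 y * NLHeat.rho y| with hMdef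
  have hM : 0 ≤ M := integral_nonneg fun y => abs_nonneg _
  refine ⟨2 + 8 * L, by linarith, fun A hA => ?_⟩
  have hβ := P.β_lt_one
  have hβ0 := P.β_pos
  have hγ := P.γ_lt
  have hA0 : 0 < A := by linarith
  -- `N` dominates every constant multiplying `A / s₀^(2β+1)` in the estimates below.
  set N : ℝ := 10 + 6 * M + (2 + 8 * L) with hN
  have hN0 : 0 < N := by positivity
  have ev : ∀ᶠ s : ℝ in atTop, 1 < s ∧ N * A < s ^ (2 * P.β + 1 - P.γ) ∧
      N * A < s ^ (2 - 2 * P.β) ∧ 1 / 2 < P.coef s 0 0 ∧ 1 / 2 < P.coef s 1 1 := by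
    filter_upwards [eventually_gt_atTop 1,
      (tendsto_rpow_atTop (by linarith : 0 < 2 * P.β + 1 - P.γ)).eventually_gt_atTop (N * A),
      (tendsto_rpow_atTop (by linarith : 0 < 2 - 2 * P.β)).eventually_gt_atTop (N * A),
      (P.tendsto_coef 0 (by norm_num)).eventually_const_lt (by norm_num : (1 / 2 : ℝ) < 1),
      (P.tendsto_coef 1 le_rfl).eventually_const_lt (by norm_num : (1 / 2 : ℝ) < 1)]
      with s h1 h2 h3 h4 h5
    exact ⟨h1, h2, h3, h4, h5⟩
  obtain ⟨S, hS⟩ := eventually_atTop.1 ev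
  refine ⟨max S 2, lt_of_lt_of_le one_lt_two (le_max_right _ _), fun s hs => ?_⟩
  obtain ⟨hs1, hsγ, hsβ, hα₀, hα₁⟩ := hS s ((le_max_left _ _).trans hs)
  have hs1' : 1 ≤ s := hs1.le
  have hs0 : 0 < s := by linarith
  have hα₀' : 0 < P.coef s 0 0 := by linarith
  have hα₁' : 0 < P.coef s 1 1 := by linarith
  set c : ℝ := A / s ^ (2 * P.β + 1) with hc
  have hc0 : 0 < c := div_pos hA0 (Real.rpow_pos_of_pos hs0 _)
  have hcγ : c * N < 1 / s ^ P.γ := by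
    have e : s ^ (2 * P.β + 1) = s ^ (2 * P.β + 1 - P.γ) * s ^ P.γ := by
      rw [← Real.rpow_add hs0]; ring_nf
    have := Real.rpow_pos_of_pos hs0 P.γ
    rw [hc, div_mul_eq_mul_div, div_lt_div_iff₀ (Real.rpow_pos_of_pos hs0 _) this, e]
    nlinarith
  have hcβ : c * N < 1 / s ^ (4 * P.β - 1) := by
    have e : s ^ (2 * P.β + 1) = s ^ (2 - 2 * P.β) * s ^ (4 * P.β - 1) := by
      rw [← Real.rpow_add hs0]; ring_nf
    have := Real.rpow_pos_of_pos hs0 (4 * P.β - 1)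
    rw [hc, div_mul_eq_mul_div, div_lt_div_iff₀ (Real.rpow_pos_of_pos hs0 _) this, e]
    nlinarith
  have half : ∀ {α : ℝ}, 1 / 2 < α → 1 / α ≤ 2 := fun {α} hα => by
    rw [div_le_iff₀ (by linarith)]; linarith
  have R := NLHeat.rectangle_map hα₀' hα₁' hc0
  have emap : (fun d : ℝ × ℝ =>
      (P.proj (P.ψinit A s d.1 d.2) s 0, P.proj (P.ψinit A s d.1 d.2) s 1)) =
      fun d : ℝ × ℝ => (c * (d.1 * P.coef s 0 0), c * (d.2 * P.coef s 1 1)) := by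
    funext d
    rw [P.proj_zero A hs1', P.proj_one A hs1']
  refine ⟨-(1 / P.coef s 0 0), 1 / P.coef s 0 0, -(1 / P.coef s 1 1), 1 / P.coef s 1 1,
    prod_mono (Icc_subset_Icc (neg_le_neg (half hα₀)) (half hα₀))
      (Icc_subset_Icc (neg_le_neg (half hα₁)) (half hα₁)),
    by rw [emap]; exact R.1, by rw [emap]; exact R.2, fun d₀ hd₀ d₁ hd₁ => ?_⟩
  have h₀ : |d₀| ≤ 2 := (abs_le.2 hd₀).trans (half hα₀)
  have h₁ : |d₁| ≤ 2 := (abs_le.2 hd₁).trans (half hα₁)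
  rw [← emap] at R
  have p₀₁ := R.1.mapsTo (show (d₀, d₁) ∈ _ from ⟨hd₀, hd₁⟩)
  have p₀ : |P.proj (P.ψinit A s d₀ d₁) s 0| ≤ c := abs_le.2 p₀₁.1
  have p₁ : |P.proj (P.ψinit A s d₀ d₁) s 1| ≤ c := abs_le.2 p₀₁.2
  have p₂ : |P.proj (P.ψinit A s d₀ d₁) s 2| ≤ c * (2 * M) := by
    rw [P.proj_two A hs1', ← hc, abs_mul, abs_of_pos hc0, abs_mul]
    have := P.abs_coef_le hs1' 2 0
    gcongr
  have hder := P.abs_deriv_ψinit_le hL0 hL hA0.le hs1' h₀ h₁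
  rw [← hc] at hder
  have hCc : (2 + 8 * L) * A / s ^ (2 * P.β + 1) = c * (2 + 8 * L) := by rw [hc]; ring
  have hcubic : ∀ {x y B : ℝ}, B ≤ N → x ≤ c * B * (1 + |y| ^ 3) →
      x < (1 + |y| ^ 3) / s ^ P.γ := by
    intro x y B hB hx
    have ht : 0 < 1 + |y| ^ 3 := by positivity
    calc x ≤ c * B * (1 + |y| ^ 3) := hx
      _ ≤ c * N * (1 + |y| ^ 3) := by gcongr
      _ < 1 / s ^ P.γ * (1 + |y| ^ 3) := by gcongr
      _ = (1 + |y| ^ 3) / s ^ P.γ := by ring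
  refine ⟨fun y => ?_, fun y => ?_, p₀, p₁, ?_, fun y => ?_, ?_, fun y => ?_⟩
  · rw [NLHeat.Params.re, mul_sub, mul_one, P.ψinit_mul_chi A hs1', sub_self]
  · exact hcubic (by linarith)
      (P.abs_rminus_ψinit_le hc hA0.le hs1' h₀ h₁ hM p₀ p₁ p₂ y)
  · refine lt_of_le_of_lt (p₂.trans ?_) hcβ
    gcongr
    linarith
  · rw [hCc]; exact hder y
  · rw [hCc]
    calc c * (2 + 8 * L) ≤ c * N := by gcongr; linarith
      _ ≤ 1 / s ^ P.γ := hcγ.le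
      _ ≤ 1 / s ^ (P.γ - 3 * P.β) := by
          gcongr
          linarith
  · exact (hcubic (by linarith)
      (P.abs_deriv_rminus_ψinit_le hs1' hM p₁ p₂ (by linarith) y (hder y))).le
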